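/- arXiv:2012.02563 — 2 statements merged into one kernel-verified Lean document; each statement's English description precedes it below -/
import Mathlib

section
/- For every nonnegative integer n, ∑_{k=0}^{n} C(n,k)^2 · C(n+k,k) · C(2n−k,n) = ∑_{k=0}^{n} C(n,k)^2 · C(2n−k,n) · C(2(n−k),n). -/
/-!
Write `C(x, k)` for `Ring.choose x k`. Up to sign, `C(-x - 1, k)` is `C(x + k, k)`, so the identity
between polynomials of which the theorem is a specialization compares the sum of
`C(n, k)² C(x + k, k) C(x + n - k, n - k)` with that of `C(n, k)² C(x + n - k, n) C(2(n - k), n)`.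
Surányi's formula expands `C(x + k, k) C(x + n - k, n - k)` in the `C(x + n - l, n)`, with
coefficients `C(k, l) C(n - k, l)`. After exchanging the sums, Vandermonde's identity evaluates the
coefficient of each `C(x + n - l, n)`.
-/

open Finset

theorem choose_mul_choose_sub_comm (n k i : ℕ) :
    n.choose k * (n - k).choose i = n.choose i * (n - i).choose k := by
  have hk := Nat.choose_mul (n := n) (Nat.le_add_right k i)
  have hi := Nat.choose_mul (n := n) (Nat.le_add_left i k)
  rw [Nat.add_sub_cancel_left] at hk
  rw [Nat.add_sub_cancel] at hi
  rw [← hk, ← hi, Nat.choose_symm_add]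

theorem choose_mul_choose_sub_sub {n i : ℕ} (hi : i ≤ n) (k : ℕ) :
    n.choose k * (n - k).choose (n - i) = n.choose i * i.choose k := by
  rw [choose_mul_choose_sub_comm, Nat.choose_symm hi, Nat.sub_sub_self hi]

theorem sum_range_choose_sq_mul_choose_mul_choose_sub (n k : ℕ) :
    ∑ i ∈ range (n + 1), n.choose i ^ 2 * (i.choose k * (n - i).choose k) =
      n.choose k ^ 2 * (2 * (n - k)).choose n := by
  rw [two_mul, Nat.add_choose_eq, Nat.sum_antidiagonal_eq_sum_range_succ_mk, mul_sum]
  refine sum_congr rfl fun i hi => ?_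
  calc n.choose i ^ 2 * (i.choose k * (n - i).choose k)
      = (n.choose i * (n - i).choose k) * (n.choose i * i.choose k) := by ring
    _ = (n.choose k * (n - k).choose i) * (n.choose k * (n - k).choose (n - i)) := by
        rw [choose_mul_choose_sub_comm n i k, choose_mul_choose_sub_sub (mem_range_succ_iff.mp hi)]
    _ = n.choose k ^ 2 * ((n - k).choose i * (n - k).choose (n - i)) := by ring

section BinomialRing

variable {R : Type*} [CommRing R] [BinomialRing R]

theorem ringChoose_add_natCast_eq_sum_range (x : R) (a : ℕ) {b t : ℕ} (htb : t ≤ b) :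
    Ring.choose (x + t) (a + b) =
      ∑ m ∈ range (b + 1), Ring.choose x (a + m) * (t.choose (b - m) : R) := by
  have vanish : ∑ i ∈ range a, Ring.choose x i * (t.choose (a + b - i) : R) = 0 :=
    sum_eq_zero fun i hi => by
      have hia := mem_range.mp hi
      rw [Nat.choose_eq_zero_of_lt (by lia), Nat.cast_zero, mul_zero]
  simp only [Ring.add_choose_eq _ (Nat.cast_commute t x).symm, Ring.choose_natCast,
    Nat.sum_antidiagonal_eq_sum_range_succ_mk]
  rw [Nat.succ_eq_add_one, add_assoc a b 1, sum_range_add, vanish, zero_add]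
  simp only [Nat.add_sub_add_left]

theorem sum_range_ringChoose_mul_choose (x : R) {m K : ℕ} (hmK : m < K) :
    ∑ l ∈ range K, Ring.choose x l * (m.choose l : R) = Ring.choose (x + m) m := by
  have vandermonde := ringChoose_add_natCast_eq_sum_range x 0 (le_refl m)
  simp only [zero_add] at vandermonde
  calc ∑ l ∈ range K, Ring.choose x l * (m.choose l : R)
      = ∑ l ∈ range (m + 1), Ring.choose x l * (m.choose l : R) := by
        refine (sum_subset (range_mono hmK) fun l _ hl => ?_).symm
        have hml : m < l := by simpa using hl
        rw [Nat.choose_eq_zero_of_lt hml, Nat.cast_zero, mul_zero]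
    _ = ∑ l ∈ range (m + 1), Ring.choose x l * (m.choose (m - l) : R) :=
        sum_congr rfl fun l hl => by rw [Nat.choose_symm (mem_range_succ_iff.mp hl)]
    _ = Ring.choose (x + m) m := vandermonde.symm

theorem ringChoose_add_mul_ringChoose (x : R) (a : ℕ) {m K : ℕ} (hmK : m < K) :
    Ring.choose (x + a) a * Ring.choose x m =
      ∑ l ∈ range K, (a.choose l : R) * m.choose l * Ring.choose (x + a) (a + m) := by
  have vandermonde : ∑ l ∈ range K, (a.choose l : R) * m.choose l = (a + m).choose a := by
    have h := sum_range_ringChoose_mul_choose (a : R) hmK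
    simp only [Ring.choose_natCast, ← Nat.cast_add] at h
    rw [h, Nat.choose_symm_add]
  rw [← sum_mul, vandermonde, ← Ring.choose_add_smul_choose, nsmul_eq_mul, add_comm m a]

theorem sum_range_ringChoose_mul_choose_mul_choose (x : R) (a b l : ℕ) :
    ∑ m ∈ range (b + 1), Ring.choose x (a + m) * (b.choose m * m.choose l : R) =
      b.choose l * Ring.choose (x + (b - l : ℕ)) (a + b) := by
  rw [ringChoose_add_natCast_eq_sum_range x a (Nat.sub_le b l), mul_sum]
  refine sum_congr rfl fun m hm => ?_
  have trinomial : (b.choose m * m.choose l : R) = b.choose l * (b - l).choose (b - m) :=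
    mod_cast congrArg (Nat.cast : ℕ → R)
      (choose_mul_choose_sub_sub (mem_range_succ_iff.mp hm) l).symm
  rw [trinomial, mul_left_comm]

/-- Surányi's formula. -/
theorem ringChoose_add_mul_ringChoose_add (x : R) (a b : ℕ) :
    Ring.choose (x + a) a * Ring.choose (x + b) b =
      ∑ l ∈ range (a + b + 1),
        (a.choose l : R) * b.choose l * Ring.choose (x + (a + b - l : ℕ)) (a + b) := by
  calc Ring.choose (x + a) a * Ring.choose (x + b) b
      = ∑ m ∈ range (b + 1), b.choose m * (Ring.choose (x + a) a * Ring.choose x m) := by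
        rw [← sum_range_ringChoose_mul_choose x b.lt_succ_self, mul_sum]
        exact sum_congr rfl fun m _ => by ring
    _ = ∑ m ∈ range (b + 1), ∑ l ∈ range (a + b + 1),
          a.choose l * (Ring.choose (x + a) (a + m) * (b.choose m * m.choose l)) := by
        refine sum_congr rfl fun m hm => ?_
        have hmb := mem_range_succ_iff.mp hm
        rw [ringChoose_add_mul_ringChoose x a (by lia : m < a + b + 1), mul_sum]
        exact sum_congr rfl fun l _ => by ring
    _ = ∑ l ∈ range (a + b + 1),
          a.choose l * (b.choose l * Ring.choose (x + a + (b - l : ℕ)) (a + b)) := by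
        rw [sum_comm]
        simp only [← mul_sum, sum_range_ringChoose_mul_choose_mul_choose]
    _ = ∑ l ∈ range (a + b + 1),
          (a.choose l : R) * b.choose l * Ring.choose (x + (a + b - l : ℕ)) (a + b) := by
        refine sum_congr rfl fun l _ => ?_
        obtain hbl | hlb := lt_or_ge b l
        · simp [Nat.choose_eq_zero_of_lt hbl]
        · rw [Nat.add_sub_assoc hlb, Nat.cast_add, add_assoc, mul_assoc]

theorem neg_n_sub_one_specialization_general (x : R) (n : ℕ) :
    ∑ k ∈ range (n + 1),
        (n.choose k : R) ^ 2 * Ring.choose (x + k) k * Ring.choose (x + (n - k : ℕ)) (n - k) =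
      ∑ k ∈ range (n + 1),
        (n.choose k : R) ^ 2 * Ring.choose (x + (n - k : ℕ)) n * (2 * (n - k)).choose n := by
  calc _ = ∑ i ∈ range (n + 1), ∑ k ∈ range (n + 1), (n.choose i : R) ^ 2 *
          (i.choose k * (n - i).choose k * Ring.choose (x + (n - k : ℕ)) n) := by
        refine sum_congr rfl fun i hi => ?_
        rw [mul_assoc, ringChoose_add_mul_ringChoose_add,
          Nat.add_sub_of_le (mem_range_succ_iff.mp hi), mul_sum]
    _ = ∑ k ∈ range (n + 1), (∑ i ∈ range (n + 1),
          (n.choose i : R) ^ 2 * (i.choose k * (n - i).choose k)) *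
            Ring.choose (x + (n - k : ℕ)) n := by
        rw [sum_comm]
        simp only [sum_mul, mul_assoc]
    _ = _ := by
        refine sum_congr rfl fun k _ => ?_
        have coefficient := congrArg (Nat.cast : ℕ → R)
          (sum_range_choose_sq_mul_choose_mul_choose_sub n k)
        push_cast at coefficient
        rw [coefficient, mul_right_comm]

end BinomialRing

theorem neg_n_sub_one_specialization (n : ℕ) :
    ∑ k ∈ Finset.range (n + 1),
        (n.choose k) ^ 2 * ((n + k).choose k) * ((2 * n - k).choose n) =
      ∑ k ∈ Finset.range (n + 1),
        (n.choose k) ^ 2 * ((2 * n - k).choose n) * ((2 * (n - k)).choose n) := by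
  have shift {k : ℕ} (hk : k ∈ range (n + 1)) : 2 * n - k = n + (n - k) := by
    rw [two_mul, Nat.add_sub_assoc (mem_range_succ_iff.mp hk)]
  have general := neg_n_sub_one_specialization_general (n : ℤ) n
  simp only [← Nat.cast_add, Ring.choose_natCast] at general
  norm_cast at general
  convert general using 3 with k hk k hk
  · rw [shift hk, Nat.choose_symm_add]
  · rw [shift hk]
end

section
/- For all nonnegative integers n and m with n ≤ m, ∑_{k=0}^{min(m−n,n)} C(m−n,k) · C(n,n−k) · C(2k,n) · C(m−k,n−k) = ∑_{k=0}^{min(m−n,n)} C(n,k) · C(m−n,n−k) · C(m−n,k) · C(n,k). -/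
/-!
Put `p = m - n` and `i = n - k`. Expanding `(2 * k).choose n` by Vandermonde's identity turns the
left-hand side into a double sum over `i + k = n` and `a + b = n`, whose summand equals
`n.choose a ^ 2 * (a.choose i * b.choose i * (p + i).choose n)`. Summing over `i` first, Riordan's
identity collapses the bracket to `p.choose a * p.choose b`.

For Riordan's identity, expand `(x + i).choose (a + b)` by Vandermonde and sum over `i`: this leaves
the expansion of `x.choose a * x.choose b` as a combination of single binomials `x.choose m`.
-/

open Finset

theorem choose_mul_choose_comm_of_add_eq {n i i' j j' : ℕ} (hi : i + i' = n) (hj : j + j' = n) :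
    n.choose i * i'.choose j = n.choose j * j'.choose i := by
  obtain rfl : i' = n - i := by omega
  obtain rfl : j' = n - j := by omega
  have choose_add_left := Nat.choose_mul (n := n) (Nat.le_add_right i j)
  have choose_add_right := Nat.choose_mul (n := n) (Nat.le_add_left j i)
  rw [Nat.add_sub_cancel_left] at choose_add_left
  rw [Nat.add_sub_cancel] at choose_add_right
  rw [← choose_add_left, ← choose_add_right, Nat.choose_symm_add]

theorem sum_choose_mul_choose_mul_choose {a b l m : ℕ} (h : l + m = a + b) :
    ∑ i ∈ range (b + 1), a.choose i * b.choose i * i.choose l = b.choose l * m.choose b := by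
  rcases lt_or_ge b l with hbl | hlb
  · rw [Nat.choose_eq_zero_of_lt hbl, zero_mul]
    refine sum_eq_zero fun i hi => ?_
    rw [Nat.choose_eq_zero_of_lt ((mem_range_succ_iff.1 hi).trans_lt hbl), mul_zero]
  · obtain rfl : m = a + (b - l) := by omega
    rw [Nat.add_choose_eq, Nat.sum_antidiagonal_eq_sum_range_succ_mk, mul_sum]
    refine sum_congr rfl fun i hi => ?_
    have hib : i ≤ b := mem_range_succ_iff.1 hi
    have swap : b.choose i * i.choose l = b.choose l * (b - l).choose (b - i) := by
      rw [← Nat.choose_symm hib]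
      exact choose_mul_choose_comm_of_add_eq (Nat.sub_add_cancel hib) (Nat.add_sub_cancel' hlb)
    rw [mul_assoc, swap, mul_left_comm]

theorem choose_mul_choose_eq_sum_antidiagonal (x a b : ℕ) :
    x.choose a * x.choose b =
      ∑ lm ∈ antidiagonal (a + b), b.choose lm.1 * lm.2.choose b * x.choose lm.2 := by
  have factor : ∀ l ∈ range (a + 1),
      b.choose l * (x - b).choose (a - l) * x.choose b =
        b.choose l * (a + b - l).choose b * x.choose (a + b - l) := fun l hl => by
    have hla : l ≤ a := mem_range_succ_iff.1 hl
    have trinomial := Nat.choose_mul (n := x) (show b ≤ a + b - l by omega)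
    rw [show a + b - l - b = a - l by omega] at trinomial
    linear_combination b.choose l * trinomial.symm
  calc x.choose a * x.choose b
      = (b + (x - b)).choose a * x.choose b := by
        rcases le_or_gt b x with hbx | hxb
        · rw [Nat.add_sub_cancel' hbx]
        · rw [Nat.choose_eq_zero_of_lt hxb, mul_zero, mul_zero]
    _ = ∑ l ∈ range (a + 1), b.choose l * (x - b).choose (a - l) * x.choose b := by
        rw [Nat.add_choose_eq, Nat.sum_antidiagonal_eq_sum_range_succ_mk, sum_mul]
    _ = ∑ l ∈ range (a + 1), b.choose l * (a + b - l).choose b * x.choose (a + b - l) :=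
        sum_congr rfl factor
    _ = ∑ l ∈ range (a + b + 1), b.choose l * (a + b - l).choose b * x.choose (a + b - l) := by
        refine (eventually_constant_sum (fun l hl => ?_) (by omega)).symm
        rcases lt_or_ge b l with hbl | hlb
        · rw [Nat.choose_eq_zero_of_lt hbl, zero_mul, zero_mul]
        · rw [Nat.choose_eq_zero_of_lt (by omega : a + b - l < b), mul_zero, zero_mul]
    _ = _ := by rw [Nat.sum_antidiagonal_eq_sum_range_succ_mk]

/-- Riordan's identity, a form of the Pfaff–Saalschütz summation. -/
theorem sum_choose_mul_choose_mul_add_choose (x a b : ℕ) :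
    ∑ i ∈ range (b + 1), a.choose i * b.choose i * (x + i).choose (a + b) =
      x.choose a * x.choose b := by
  calc _ = ∑ i ∈ range (b + 1), ∑ lm ∈ antidiagonal (a + b),
          a.choose i * b.choose i * i.choose lm.1 * x.choose lm.2 := by
        simp only [add_comm x, Nat.add_choose_eq, mul_sum, mul_assoc]
    _ = ∑ lm ∈ antidiagonal (a + b),
          (∑ i ∈ range (b + 1), a.choose i * b.choose i * i.choose lm.1) * x.choose lm.2 := by
        simp only [sum_comm (s := range (b + 1)), sum_mul]
    _ = ∑ lm ∈ antidiagonal (a + b), b.choose lm.1 * lm.2.choose b * x.choose lm.2 :=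
        sum_congr rfl fun lm hlm => by
          rw [sum_choose_mul_choose_mul_choose (mem_antidiagonal.1 hlm)]
    _ = x.choose a * x.choose b := (choose_mul_choose_eq_sum_antidiagonal x a b).symm

theorem choose_mul_choose_mul_add_choose_mul_eq_sq_mul {n k i a b : ℕ} (p : ℕ)
    (hki : k + i = n) (hab : a + b = n) :
    p.choose k * n.choose i * (p + i).choose i * (k.choose a * k.choose b) =
      n.choose a ^ 2 * (a.choose i * b.choose i * (p + i).choose n) := by
  have choose_trinomial : (p + i).choose n * n.choose i = (p + i).choose i * p.choose k := by
    rw [Nat.choose_mul (by omega), Nat.add_sub_cancel, show n - i = k by omega]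
  have swap_a : n.choose i * k.choose a = n.choose a * b.choose i :=
    choose_mul_choose_comm_of_add_eq (by omega) hab
  have swap_b : n.choose i * k.choose b = n.choose a * a.choose i := by
    rw [Nat.choose_symm_of_eq_add hab.symm]
    exact choose_mul_choose_comm_of_add_eq (by omega) (by omega)
  calc _ = (p + i).choose i * p.choose k * n.choose i * (k.choose a * k.choose b) := by ring
    _ = (p + i).choose n * (n.choose i * k.choose a) * (n.choose i * k.choose b) := by
      rw [← choose_trinomial]; ring
    _ = _ := by rw [swap_a, swap_b]; ring

theorem sum_antidiagonal_choose_two_mul_eq_sum_choose_sq (p n : ℕ) :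
    ∑ ki ∈ antidiagonal n,
        p.choose ki.1 * n.choose ki.2 * (2 * ki.1).choose n * (p + ki.2).choose ki.2 =
      ∑ ab ∈ antidiagonal n, n.choose ab.1 ^ 2 * (p.choose ab.1 * p.choose ab.2) := by
  have expand : ∀ ki ∈ antidiagonal n,
      p.choose ki.1 * n.choose ki.2 * (2 * ki.1).choose n * (p + ki.2).choose ki.2 =
        ∑ ab ∈ antidiagonal n, n.choose ab.1 ^ 2 *
          (ab.1.choose ki.2 * ab.2.choose ki.2 * (p + ki.2).choose n) := fun ki hki => by
    rw [two_mul, Nat.add_choose_eq, mul_right_comm, mul_sum]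
    exact sum_congr rfl fun ab hab =>
      choose_mul_choose_mul_add_choose_mul_eq_sq_mul p (mem_antidiagonal.1 hki)
        (mem_antidiagonal.1 hab)
  have collapse : ∀ a b : ℕ,
      ∑ ki ∈ antidiagonal (a + b), a.choose ki.2 * b.choose ki.2 * (p + ki.2).choose (a + b) =
        p.choose a * p.choose b := fun a b => by
    rw [← Nat.sum_antidiagonal_swap, Nat.sum_antidiagonal_eq_sum_range_succ_mk,
      ← sum_choose_mul_choose_mul_add_choose]
    refine eventually_constant_sum (fun i hi => ?_) (by omega)
    simp [Nat.choose_eq_zero_of_lt hi]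
  rw [sum_congr rfl expand, sum_comm]
  refine sum_congr rfl fun ab hab => ?_
  obtain rfl : ab.1 + ab.2 = n := mem_antidiagonal.1 hab
  rw [← mul_sum, collapse]

theorem sum_range_min_succ_eq {M : Type*} [AddCommMonoid M] {p : ℕ} {f : ℕ → M}
    (hf : ∀ k, p < k → f k = 0) (n : ℕ) :
    ∑ k ∈ range (min p n + 1), f k = ∑ k ∈ range (n + 1), f k := by
  rcases le_total p n with hpn | hnp
  · rw [min_eq_left hpn, eventually_constant_sum hf (Nat.succ_le_succ hpn)]
  · rw [min_eq_right hnp]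

theorem generalized_strehl (n m : ℕ) (hnm : n ≤ m) :
    ∑ k ∈ Finset.range (min (m - n) n + 1),
        ((m - n).choose k) * (n.choose (n - k)) * ((2 * k).choose n) * ((m - k).choose (n - k)) =
      ∑ k ∈ Finset.range (min (m - n) n + 1),
        (n.choose k) * ((m - n).choose (n - k)) * ((m - n).choose k) * (n.choose k) := by
  obtain ⟨p, rfl⟩ := Nat.exists_eq_add_of_le' hnm
  rw [Nat.add_sub_cancel,
    sum_range_min_succ_eq fun k hk => by simp [Nat.choose_eq_zero_of_lt hk],
    sum_range_min_succ_eq fun k hk => by simp [Nat.choose_eq_zero_of_lt hk]]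
  calc _ = ∑ ki ∈ antidiagonal n,
        p.choose ki.1 * n.choose ki.2 * (2 * ki.1).choose n * (p + ki.2).choose ki.2 := by
        rw [Nat.sum_antidiagonal_eq_sum_range_succ_mk]
        exact sum_congr rfl fun k hk => by
          rw [Nat.add_sub_assoc (mem_range_succ_iff.1 hk)]
    _ = ∑ ab ∈ antidiagonal n, n.choose ab.1 ^ 2 * (p.choose ab.1 * p.choose ab.2) :=
        sum_antidiagonal_choose_two_mul_eq_sum_choose_sq p n
    _ = _ := by
        rw [Nat.sum_antidiagonal_eq_sum_range_succ_mk]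
        exact sum_congr rfl fun k _ => by ring
end
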